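/- Assume MA(ω₁) and 2^{ω₁} = ω₂. Then there is a topology on X = ω₂ + 1 which is Fréchet and such that the tightness of the Gδ-modification satisfies t(X_δ) = ω₂. -/

import Mathlib

open Set Filter Topology

universe u v

noncomputable section

/-- The Gδ-modification of a topology: the topology generated by the Gδ subsets. -/
def gdeltaMod {X : Type*} (t : TopologicalSpace X) : TopologicalSpace X :=
  TopologicalSpace.generateFrom {s : Set X | @IsGδ X t s}

/-- `x` is a Fréchet point: whenever `x ∈ cl A` there is a sequence in `A` converging to `x`. -/
def IsFrechetPt {X : Type*} (t : TopologicalSpace X) (x : X) : Prop :=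
  ∀ A : Set X, x ∈ @closure X t A →
    ∃ u : ℕ → X, (∀ n, u n ∈ A) ∧ @Filter.Tendsto ℕ X u Filter.atTop (@nhds X t x)

/-- `x` is an α₁-point: given countably many sequences converging to `x`, there is a single
sequence converging to `x` whose range contains the range of each given one modulo finite. -/
def IsAlpha1Pt {X : Type*} (t : TopologicalSpace X) (x : X) : Prop :=
  ∀ u : ℕ → ℕ → X, (∀ n, @Filter.Tendsto ℕ X (u n) Filter.atTop (@nhds X t x)) →
    ∃ v : ℕ → X, @Filter.Tendsto ℕ X v Filter.atTop (@nhds X t x) ∧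
      ∀ n, (Set.range (u n) \ Set.range v).Finite

/-- A set `B` converges to `x`: every neighborhood of `x` contains all but finitely
many elements of `B`. -/
def SetConverges {X : Type*} (t : TopologicalSpace X) (B : Set X) (x : X) : Prop :=
  ∀ U ∈ @nhds X t x, (B \ U).Finite

/-- Tightness of the space is at most κ. -/
def tightnessLe (X : Type u) (t : TopologicalSpace X) (κ : Cardinal.{u}) : Prop :=
  ∀ (x : X) (A : Set X), x ∈ @closure X t A →
    ∃ B : Set X, B ⊆ A ∧ Cardinal.mk ↥B ≤ κ ∧ x ∈ @closure X t B

/-- The tightness `t(X)`: the least infinite cardinal κ such that whenever `x ∈ cl A`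
there is `B ⊆ A` with `|B| ≤ κ` and `x ∈ cl B`. -/
def tightness (X : Type u) (t : TopologicalSpace X) : Cardinal.{u} :=
  sInf {κ : Cardinal.{u} | Cardinal.aleph0 ≤ κ ∧ tightnessLe X t κ}

/-- The tightness `t(x, X)` of a point. -/
def tightnessPt {X : Type u} (t : TopologicalSpace X) (x : X) : Cardinal.{u} :=
  sInf {κ : Cardinal.{u} | Cardinal.aleph0 ≤ κ ∧
    ∀ A : Set X, x ∈ @closure X t A →
      ∃ B : Set X, B ⊆ A ∧ Cardinal.mk ↥B ≤ κ ∧ x ∈ @closure X t B}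
/-- Martin's Axiom `MA(ω₁)`: for every nonempty ccc partial order `P` (every antichain in the
sense of forcing is countable) and every family of at most `ω₁` dense subsets of `P`, there is
a filter on `P` meeting every member of the family. -/
def MartinsAxiomOmega1 : Prop :=
  ∀ (P : Type u) (_ : PartialOrder P), Nonempty P →
    (∀ A : Set P, (∀ p ∈ A, ∀ q ∈ A, p ≠ q → ¬ ∃ r, r ≤ p ∧ r ≤ q) → A.Countable) →
    ∀ 𝒟 : Set (Set P), Cardinal.mk ↥𝒟 ≤ Cardinal.aleph 1 →
      (∀ D ∈ 𝒟, ∀ p : P, ∃ q ∈ D, q ≤ p) →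
      ∃ G : Set P, G.Nonempty ∧
        (∀ p ∈ G, ∀ q ∈ G, ∃ r ∈ G, r ≤ p ∧ r ≤ q) ∧
        (∀ p ∈ G, ∀ q : P, p ≤ q → q ∈ G) ∧
        ∀ D ∈ 𝒟, (G ∩ D).Nonempty

/-! ### A weak Δ-system lemma -/

theorem exists_weak_root {ι E : Type*} (S : Set ι) (hS : ¬ S.Countable) (g : ι → Finset E) :
    ∃ (r : Finset E) (B : Set ι) (N : ℕ), B ⊆ S ∧ ¬ B.Countable ∧
      (∀ x, x ∉ r → {p ∈ B | x ∈ g p}.Countable) ∧ (∀ p ∈ B, r ⊆ g p) ∧ ∀ p ∈ B, (g p).card ≤ N := by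
  classical
  have h1 : ∃ N : ℕ, ¬ {p ∈ S | (g p).card = N}.Countable := by
    by_contra h
    push Not at h
    apply hS
    refine (Set.countable_iUnion h).mono ?_
    intro p hp
    simp [hp]
  obtain ⟨N, hN⟩ := h1
  let T : Set ℕ := {k | ∃ r : Finset E, r.card = k ∧ ¬ {p ∈ S | (g p).card = N ∧ r ⊆ g p}.Countable}
  have hT0 : (0 : ℕ) ∈ T := ⟨∅, by simp, by simpa using hN⟩
  have hTb : ∀ k ∈ T, k ≤ N := by
    rintro k ⟨r, rfl, hr⟩
    by_contra hk
    apply hr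
    convert Set.countable_empty (α := ι)
    ext p
    simp only [mem_ofPred_eq, mem_empty_iff_false, iff_false]
    rintro ⟨-, h2, h3⟩
    have := Finset.card_le_card h3
    omega
  have hmax : ∃ k ∈ T, ∀ l ∈ T, l ≤ k := by
    have := Nat.sSup_mem (s := T) ⟨0, hT0⟩ ⟨N, hTb⟩
    exact ⟨_, this, fun l hl => le_csSup ⟨N, hTb⟩ hl⟩
  obtain ⟨k, ⟨r, rfl, hr⟩, hk⟩ := hmax
  refine ⟨r, {p ∈ S | (g p).card = N ∧ r ⊆ g p}, N, fun p hp => hp.1, hr, ?_,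
    fun p hp => hp.2.2, fun p hp => hp.2.1.le⟩
  intro x hx
  by_contra hc
  have : (insert x r).card ∈ T := by
    refine ⟨_, rfl, fun h => hc (h.mono ?_)⟩
    rintro p ⟨⟨h1, h2, h3⟩, h4⟩
    exact ⟨h1, h2, Finset.insert_subset h4 h3⟩
  have := hk _ this
  rw [Finset.card_insert_of_notMem hx] at this
  omega

/-! ### The poset -/

/-- Finite approximations to a set almost disjoint from all `A k`. -/
@[ext]
structure ADCond {Q K : Type u} (A : K → Set Q) : Type u where
  s : Finset Q
  F : Finset K

instance {Q K : Type u} (A : K → Set Q) : PartialOrder (ADCond A) where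
  le q p := p.s ⊆ q.s ∧ p.F ⊆ q.F ∧ ∀ x ∈ q.s, x ∉ p.s → ∀ k ∈ p.F, x ∉ A k
  le_refl p := ⟨subset_rfl, subset_rfl, fun x h h' => absurd h h'⟩
  le_trans r q p h1 h2 := ⟨h2.1.trans h1.1, h2.2.1.trans h1.2.1, by
    intro x hx hxp k hk
    by_cases hq : x ∈ q.s
    · exact h2.2.2 x hq hxp k hk
    · exact h1.2.2 x hx hq k (h2.2.1 hk)⟩
  le_antisymm p q h1 h2 := ADCond.ext (h2.1.antisymm h1.1) (h2.2.1.antisymm h1.2.1)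

theorem ADCond.le_def {Q K : Type u} {A : K → Set Q} (q p : ADCond A) :
    q ≤ p ↔ p.s ⊆ q.s ∧ p.F ⊆ q.F ∧ ∀ x ∈ q.s, x ∉ p.s → ∀ k ∈ p.F, x ∉ A k := Iff.rfl

theorem ADCond.compat {Q K : Type u} {A : K → Set Q} (p q : ADCond A)
    (h1 : ∀ x ∈ q.s, x ∉ p.s → ∀ k ∈ p.F, x ∉ A k)
    (h2 : ∀ x ∈ p.s, x ∉ q.s → ∀ k ∈ q.F, x ∉ A k) : ∃ r, r ≤ p ∧ r ≤ q := by
  classical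
  refine ⟨⟨p.s ∪ q.s, p.F ∪ q.F⟩, ⟨Finset.subset_union_left, Finset.subset_union_left, ?_⟩,
    ⟨Finset.subset_union_right, Finset.subset_union_right, ?_⟩⟩
  · intro x hx hxp
    rcases Finset.mem_union.1 hx with h | h
    · exact absurd h hxp
    · exact h1 x h hxp
  · intro x hx hxp
    rcases Finset.mem_union.1 hx with h | h
    · exact h2 x h hxp
    · exact absurd h hxp

theorem ADCond.ccc {Q K : Type u} (A : K → Set Q) (hA : ∀ k, (A k).Countable)
    (had : ∀ k l, k ≠ l → (A k ∩ A l).Finite) (S : Set (ADCond A))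
    (hS : ∀ p ∈ S, ∀ q ∈ S, p ≠ q → ¬ ∃ r, r ≤ p ∧ r ≤ q) : S.Countable := by
  classical
  by_contra hunc
  obtain ⟨r, B, N, hBS, hB, hr, hrB, hN⟩ := exists_weak_root S hunc (fun p => p.s)
  obtain ⟨r', C, N', hCB, hC, hr', -, -⟩ := exists_weak_root B hB (fun p => p.F)
  -- conditions meeting a countable set of points outside the root are countably many
  have key : ∀ Z : Set Q, Z.Countable → {p ∈ B | ∃ x ∈ p.s, x ∉ r ∧ x ∈ Z}.Countable := by
    intro Z hZ
    have : (⋃ x ∈ Z \ (r : Set Q), {p ∈ B | x ∈ p.s}).Countable :=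
      (hZ.mono sdiff_subset).biUnion fun x hx => hr x (by simpa using hx.2)
    refine this.mono ?_
    rintro p ⟨hp, x, hx, hxr, hxZ⟩
    simp only [mem_iUnion]
    exact ⟨x, ⟨hxZ, by simpa using hxr⟩, hp, hx⟩
  have keyF : ∀ G : Finset K, (⋃ k ∈ G, A k).Countable := fun G =>
    G.countable_toSet.biUnion fun k _ => hA k
  -- a sequence with pairwise disjoint tails
  let C' : Set (ADCond A) := C \ {p ∈ B | ∃ x ∈ p.s, x ∉ r ∧ x ∈ ⋃ k ∈ r', A k}
  have hC' : ¬ C'.Countable := by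
    intro h
    apply hC
    refine (h.union (key _ (keyF r'))).mono ?_
    intro p hp
    by_cases h : p ∈ {p ∈ B | ∃ x ∈ p.s, x ∉ r ∧ x ∈ ⋃ k ∈ r', A k}
    · exact Or.inr h
    · exact Or.inl ⟨hp, h⟩
  have hnot : ∀ Z : Set (ADCond A), Z.Countable → ∃ p ∈ C', p ∉ Z := by
    intro Z hZ
    by_contra h
    push Not at h
    exact hC' (hZ.mono h)
  obtain ⟨p, hpC, hpd⟩ := exists_seq_of_forall_finset_exists (fun p => p ∈ C')
    (fun p q : ADCond A => ∀ x ∈ q.s, x ∉ r → x ∉ p.s) (by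
      intro G _
      obtain ⟨q, hq, hq'⟩ := hnot _ (key (⋃ p ∈ G, (p.s : Set Q))
        (G.countable_toSet.biUnion fun p _ => p.s.countable_toSet))
      refine ⟨q, hq, fun p hp x hx hxr hxp => hq' ⟨hCB hq.1, x, hx, hxr, ?_⟩⟩
      simp only [mem_iUnion]
      exact ⟨p, hp, hxp⟩)
  -- the set of indices whose tail meets `A k`
  let M : K → Set ℕ := fun k => {n | ∃ x ∈ (p n).s, x ∉ r ∧ x ∈ A k}
  let Z0 : Set (ADCond A) := range p ∪ {q ∈ B | ∃ x ∈ q.s, x ∉ r ∧ x ∈ ⋃ n, ⋃ k ∈ (p n).F, A k}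
  have hZ0 : Z0.Countable := (countable_range p).union
    (key _ (countable_iUnion fun n => keyF _))
  have hk : ∀ q ∈ C', q ∉ Z0 → ∃ k ∈ q.F, k ∉ r' ∧ M k ∈ (hyperfilter ℕ : Ultrafilter ℕ) := by
    intro q hq hqZ
    have hcov : (⋃ k ∈ {k | k ∈ q.F ∧ k ∉ r'}, M k) ∈ (hyperfilter ℕ : Ultrafilter ℕ) := by
      refine Filter.mem_of_superset Filter.univ_mem ?_
      intro n _
      by_contra hn
      simp only [mem_iUnion, not_exists] at hn
      have hne : p n ≠ q := fun h => hqZ (Or.inl ⟨n, h⟩)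
      refine hS _ (hBS (hCB (hpC n).1)) _ (hBS (hCB hq.1)) hne (ADCond.compat _ _ ?_ ?_)
      · intro x hx hxp k hk hxk
        by_cases hxr : x ∈ r
        · exact absurd (hrB _ (hCB (hpC n).1) hxr) hxp
        · refine hqZ (Or.inr ⟨hCB hq.1, x, hx, hxr, ?_⟩)
          simp only [mem_iUnion]
          exact ⟨n, k, hk, hxk⟩
      · intro x hx hxq k hk hxk
        by_cases hxr : x ∈ r
        · exact absurd (hrB _ (hCB hq.1) hxr) hxq
        · by_cases hkr : k ∈ r'
          · refine (hpC n).2 ⟨hCB (hpC n).1, x, hx, hxr, ?_⟩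
            simp only [mem_iUnion]
            exact ⟨k, hkr, hxk⟩
          · exact hn k ⟨hk, hkr⟩ ⟨x, hx, hxr, hxk⟩
    rw [Ultrafilter.finite_biUnion_mem_iff (q.F.finite_toSet.subset fun k hk => hk.1)] at hcov
    obtain ⟨k, hk, hkM⟩ := hcov
    exact ⟨k, hk.1, hk.2, hkM⟩
  let L : Set K := {k | k ∉ r' ∧ M k ∈ (hyperfilter ℕ : Ultrafilter ℕ)}
  have hL : L.Infinite := by
    intro hfin
    have : (⋃ k ∈ L, {q ∈ C | k ∈ q.F}).Countable := hfin.countable.biUnion fun k hk => hr' k hk.1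
    obtain ⟨q, hq, hqn⟩ := hnot _ (hZ0.union this)
    obtain ⟨k, hk1, hk2, hk3⟩ := hk q hq (fun h => hqn (Or.inl h))
    refine hqn (Or.inr ?_)
    simp only [mem_iUnion]
    exact ⟨k, ⟨hk2, hk3⟩, hq.1, hk1⟩
  obtain ⟨G, hGL, hGc⟩ := hL.exists_subset_card_eq (N + 1)
  -- finite set of common points
  let D : Set Q := ⋃ k ∈ G, ⋃ l ∈ G, {x | k ≠ l ∧ x ∈ A k ∩ A l}
  have hD : D.Finite := by
    refine G.finite_toSet.biUnion fun k _ => G.finite_toSet.biUnion fun l _ => ?_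
    by_cases hkl : k = l
    · simp [hkl]
    · simpa [hkl] using had k l hkl
  have hDn : {n | ∃ x ∈ (p n).s, x ∉ r ∧ x ∈ D}.Finite := by
    have : (⋃ x ∈ D, {n | x ∈ (p n).s ∧ x ∉ r}).Finite := by
      refine hD.biUnion fun x _ => Set.Subsingleton.finite ?_
      intro m hm n hn
      rcases lt_trichotomy m n with h | h | h
      · exact absurd hm.1 (hpd m n h x hn.1 hn.2)
      · exact h
      · exact absurd hn.1 (hpd n m h x hm.1 hm.2)
    refine this.subset ?_
    rintro n ⟨x, hx, hxr, hxD⟩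
    simp only [mem_iUnion]
    exact ⟨x, hxD, hx, hxr⟩
  have hmem : (⋂ k ∈ G, M k) ∩ {n | ∃ x ∈ (p n).s, x ∉ r ∧ x ∈ D}ᶜ ∈ hyperfilter ℕ := by
    refine Filter.inter_mem ?_ (hyperfilter_le_cofinite hDn.compl_mem_cofinite)
    exact (Filter.biInter_finset_mem G).2 fun k hk => (hGL hk).2
  obtain ⟨n, hn1, hn2⟩ := Filter.nonempty_of_mem hmem
  simp only [mem_iInter] at hn1
  have hn1' : ∀ k, ∃ x, k ∈ G → x ∈ (p n).s ∧ x ∉ r ∧ x ∈ A k := by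
    intro k
    by_cases hk : k ∈ G
    · obtain ⟨x, hx⟩ := hn1 k hk
      exact ⟨x, fun _ => hx⟩
    · obtain ⟨k', hk'⟩ : G.Nonempty := Finset.card_pos.1 (by omega)
      obtain ⟨x, hx⟩ := hn1 k' hk'
      exact ⟨x, fun h => absurd h hk⟩
  choose x hx using hn1'
  have hcard : G.card ≤ (p n).s.card := by
    refine Finset.card_le_card_of_injOn x (fun k hk => (hx k hk).1) ?_
    intro k hk l hl hkl
    by_contra hne
    refine hn2 ⟨x k, (hx k hk).1, (hx k hk).2.1, ?_⟩
    simp only [D, mem_iUnion]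
    exact ⟨k, hk, l, hl, hne, (hx k hk).2.2, hkl ▸ (hx l hl).2.2⟩
  have := hN _ (hCB (hpC n).1)
  omega

theorem MA_almost_disjoint (hMA : MartinsAxiomOmega1.{u}) {Q K J : Type u} (A : K → Set Q)
    (hA : ∀ k, (A k).Countable) (had : ∀ k l, k ≠ l → (A k ∩ A l).Finite)
    (D : J → Set Q) (hD : ∀ j (G : Finset K), ∃ x ∈ D j, ∀ k ∈ G, x ∉ A k)
    (hK : Cardinal.mk K ≤ Cardinal.aleph 1) (hJ : Cardinal.mk J ≤ Cardinal.aleph 1) :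
    ∃ R : Set Q, (∀ k, (R ∩ A k).Finite) ∧ ∀ j, (R ∩ D j).Nonempty := by
  classical
  let E1 : K → Set (ADCond A) := fun k => {p | k ∈ p.F}
  let E2 : J → Set (ADCond A) := fun j => {p | ∃ x ∈ p.s, x ∈ D j}
  obtain ⟨G, -, hG1, -, hG2⟩ := hMA (ADCond A) inferInstance ⟨⟨∅, ∅⟩⟩ (ADCond.ccc A hA had)
    (range E1 ∪ range E2) (by
      refine (Cardinal.mk_union_le _ _).trans ?_
      refine Cardinal.add_le_of_le (Cardinal.aleph0_le_aleph 1) ?_ ?_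
      · exact Cardinal.mk_range_le.trans hK
      · exact Cardinal.mk_range_le.trans hJ) (by
      rintro E (⟨k, rfl⟩ | ⟨j, rfl⟩) p
      · refine ⟨⟨p.s, insert k p.F⟩, Finset.mem_insert_self _ _, subset_rfl,
          Finset.subset_insert _ _, fun x h h' => absurd h h'⟩
      · obtain ⟨x, hx, hxF⟩ := hD j p.F
        refine ⟨⟨insert x p.s, p.F⟩, ⟨x, Finset.mem_insert_self _ _, hx⟩,
          Finset.subset_insert _ _, subset_rfl, fun y h h' => ?_⟩
        rcases Finset.mem_insert.1 h with rfl | h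
        · exact hxF
        · exact absurd h h')
  refine ⟨⋃ p ∈ G, (p.s : Set Q), fun k => ?_, fun j => ?_⟩
  · obtain ⟨p, hpG, hp⟩ := hG2 (E1 k) (Or.inl ⟨k, rfl⟩)
    refine p.s.finite_toSet.subset ?_
    rintro x ⟨hx, hxk⟩
    simp only [mem_iUnion] at hx
    obtain ⟨q, hq, hxq⟩ := hx
    obtain ⟨r, -, hrp, hrq⟩ := hG1 p hpG q hq
    by_contra hxp
    exact hrp.2.2 x (hrq.1 hxq) hxp k hp hxk
  · obtain ⟨p, hpG, x, hx, hxj⟩ := hG2 (E2 j) (Or.inr ⟨j, rfl⟩)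
    refine ⟨x, ?_, hxj⟩
    simp only [mem_iUnion]
    exact ⟨p, hpG, hx⟩

theorem MA_finite_to_one (hMA : MartinsAxiomOmega1.{u}) {T I : Type u} (a : I → Set T)
    (ha : ∀ i, (a i).Countable) (had : ∀ i j, i ≠ j → (a i ∩ a j).Finite)
    (hT : Cardinal.mk T ≤ Cardinal.aleph 1) (hI : Cardinal.mk I ≤ Cardinal.aleph 1) :
    ∃ f : T → ℕ, ∀ i n, {x ∈ a i | f x = n}.Finite := by
  classical
  let A : I × ULift.{u} ℕ → Set (T × ℕ) := fun k => {q | q.1 ∈ a k.1 ∧ q.2 = k.2.down}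
  obtain ⟨R, hR1, hR2⟩ := MA_almost_disjoint hMA A (by
      intro k
      refine ((ha k.1).image (fun x => (x, k.2.down))).mono ?_
      rintro ⟨x, n⟩ ⟨hx, hn⟩
      exact ⟨x, hx, by simp_all⟩) (by
      rintro ⟨i, ⟨m⟩⟩ ⟨j, ⟨n⟩⟩ hne
      by_cases hij : i = j
      · subst hij
        convert Set.finite_empty
        ext ⟨x, l⟩
        simp only [A, mem_inter_iff, mem_ofPred_eq, mem_empty_iff_false, iff_false]
        rintro ⟨⟨_, h1⟩, _, h2⟩
        exact hne (by rw [← h1, ← h2])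
      · refine ((had i j hij).image (fun x => (x, m))).subset ?_
        rintro ⟨x, l⟩ ⟨⟨h1, h2⟩, h3, h4⟩
        exact ⟨x, ⟨h1, h3⟩, by simp_all⟩)
    (fun x : T => {q : T × ℕ | q.1 = x}) (by
      intro x G
      obtain ⟨n, hn⟩ := Infinite.exists_notMem_finset (G.image fun k => k.2.down)
      refine ⟨(x, n), rfl, fun k hk h => hn ?_⟩
      exact Finset.mem_image.2 ⟨k, hk, h.2.symm⟩) (by
      rw [Cardinal.mk_prod, Cardinal.lift_id, Cardinal.lift_id]
      refine Cardinal.mul_le_of_le (Cardinal.aleph0_le_aleph 1) hI ?_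
      simp) hT
  have : ∀ x, ∃ n, (x, n) ∈ R := by
    intro x
    obtain ⟨⟨y, n⟩, h1, h2⟩ := hR2 x
    exact ⟨n, by rw [← show y = x from h2]; exact h1⟩
  choose f hf using this
  refine ⟨f, fun i n => ?_⟩
  refine ((hR1 (i, ⟨n⟩)).image Prod.fst).subset ?_
  rintro x ⟨hx, hn⟩
  exact ⟨(x, n), ⟨hn ▸ hf x, hx, rfl⟩, rfl⟩

/-! ### Diamond on cofinality `ω` (Shelah) -/

/-- There is a strictly increasing cofinal `ω`-sequence below `γ`. -/
def CofOm {W : Type u} [LinearOrder W] (γ : W) : Prop :=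
  ∃ c : ℕ → W, StrictMono c ∧ (∀ n, c n < γ) ∧ ∀ α < γ, ∃ n, α ≤ c n

theorem bounded_of_card {W : Type u} [LinearOrder W]
    (hW : Cardinal.aleph 1 < Cardinal.mk W)
    (hI : ∀ x : W, Cardinal.mk (Iio x) ≤ Cardinal.aleph 1) {ι : Type u}
    (hι : Cardinal.mk ι ≤ Cardinal.aleph 1) (f : ι → W) : ∃ γ, ∀ i, f i < γ := by
  by_contra h
  push Not at h
  have hu : (⋃ i, Iic (f i)) = univ := by
    rw [eq_univ_iff_forall]
    intro x
    obtain ⟨i, hi⟩ := h x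
    exact mem_iUnion.2 ⟨i, hi⟩
  have h1 : Cardinal.mk (⋃ i, Iic (f i)) ≤ Cardinal.aleph 1 := by
    refine (Cardinal.mk_iUnion_le _).trans ?_
    refine Cardinal.mul_le_of_le (Cardinal.aleph0_le_aleph 1) hι ?_
    refine ciSup_le' fun i => ?_
    rw [← Iio_insert]
    refine (Cardinal.mk_insert_le).trans ?_
    exact Cardinal.add_le_of_le (Cardinal.aleph0_le_aleph 1) (hI _)
      (Cardinal.one_le_aleph0.trans (Cardinal.aleph0_le_aleph 1))
  rw [hu, Cardinal.mk_univ] at h1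
  exact absurd hW (not_lt.2 h1)

theorem exists_closed {W : Type u} [LinearOrder W] [WellFoundedLT W]
    (hW : Cardinal.aleph 1 < Cardinal.mk W)
    (hI : ∀ x : W, Cardinal.mk (Iio x) ≤ Cardinal.aleph 1) (F : W → W) :
    ∃ γ, (∀ α < γ, F α < γ) ∧ CofOm γ := by
  have hne : Nonempty W := by
    rw [← Cardinal.mk_ne_zero_iff]
    exact (lt_of_le_of_lt zero_le hW).ne'
  have step : ∀ x : W, ∃ y, x < y ∧ ∀ α ≤ x, F α < y := by
    intro x
    obtain ⟨y, hy⟩ := bounded_of_card hW hI (ι := Option (Iio x) ⊕ PUnit) (by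
      simp only [Cardinal.mk_sum, Cardinal.mk_option, Cardinal.lift_id]
      refine Cardinal.add_le_of_le (Cardinal.aleph0_le_aleph 1) ?_ ?_
      · exact Cardinal.add_le_of_le (Cardinal.aleph0_le_aleph 1) (hI _)
          (Cardinal.one_le_aleph0.trans (Cardinal.aleph0_le_aleph 1))
      · simpa using (Cardinal.one_le_aleph0.trans (Cardinal.aleph0_le_aleph 1)))
      (fun i => match i with
        | Sum.inl (some a) => F a
        | Sum.inl none => F x
        | Sum.inr _ => x)
    refine ⟨y, hy (Sum.inr ⟨⟩), fun α hα => ?_⟩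
    rcases hα.eq_or_lt with rfl | h
    · exact hy (Sum.inl none)
    · exact hy (Sum.inl (some ⟨α, h⟩))
  choose g hg1 hg2 using step
  let c : ℕ → W := fun n => g^[n] (Classical.arbitrary W)
  have hc : ∀ n, c (n + 1) = g (c n) := fun n => Function.iterate_succ_apply' g n _
  have hmono : StrictMono c := strictMono_nat_of_lt_succ fun n => by rw [hc]; exact hg1 _
  have hb : {γ : W | ∀ n, c n < γ}.Nonempty := by
    obtain ⟨γ, hγ⟩ := bounded_of_card hW hI (ι := ULift.{u} ℕ) (by simp) (fun n => c n.down)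
    exact ⟨γ, fun n => hγ ⟨n⟩⟩
  obtain ⟨γ, hγ, hmin⟩ := WellFounded.has_min (wellFounded_lt (α := W)) _ hb
  have hcof : ∀ α < γ, ∃ n, α ≤ c n := by
    intro α hα
    by_contra h
    push Not at h
    exact hmin α h hα
  refine ⟨γ, fun α hα => ?_, c, hmono, hγ, hcof⟩
  obtain ⟨n, hn⟩ := hcof α hα
  have := hg2 _ _ hn
  rw [← hc] at this
  exact this.trans (hγ _)

theorem diamond {W J : Type u} [LinearOrder W] [WellFoundedLT W] [LinearOrder J] [WellFoundedLT J]
    (hW : Cardinal.mk W = Cardinal.aleph 2)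
    (hI : ∀ x : W, Cardinal.mk (Iio x) ≤ Cardinal.aleph 1)
    (hJ : Cardinal.mk J = Cardinal.aleph 1) (hJI : ∀ x : J, (Iio x).Countable)
    (hcard : (2 : Cardinal.{u}) ^ (Cardinal.aleph 1) = Cardinal.aleph 2) :
    ∃ Z : W → Set W, ∀ (Y : Set W) (F : W → W), ∃ γ, (∀ α < γ, F α < γ) ∧ CofOm γ ∧
      Y ∩ Iio γ = Z γ := by
  classical
  have hW1 : Cardinal.aleph 1 < Cardinal.mk W := by
    rw [hW]; exact Cardinal.aleph_lt_aleph.2 (by norm_num)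
  have hJunc : ¬ (univ : Set J).Countable := by
    rw [← Cardinal.le_aleph0_iff_set_countable, Cardinal.mk_univ, hJ, not_le]
    exact Cardinal.aleph0_lt_aleph_one
  have hJIic : ∀ x : J, (Iic x).Countable := by
    intro x
    rw [← Iio_insert]
    exact (hJI x).insert x
  -- enumeration of bounded sets
  have henum : ∃ e : W → Σ α : W, (J → J → Set (Iio α)), Function.Surjective e := by
    have hle : Cardinal.mk (Σ α : W, (J → J → Set (Iio α))) ≤ Cardinal.mk W := by
      rw [Cardinal.mk_sigma]
      refine (Cardinal.sum_le_sum _ (fun _ => Cardinal.aleph 2) ?_).trans ?_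
      · intro α
        have h0 : Cardinal.mk (Set (Iio α)) ≤ Cardinal.aleph 2 := by
          rw [Cardinal.mk_set, ← hcard]
          exact Cardinal.power_le_power_left two_ne_zero (hI α)
        have hpow : ∀ c : Cardinal.{u}, c ≤ Cardinal.aleph 2 →
            c ^ Cardinal.aleph 1 ≤ Cardinal.aleph 2 := by
          intro c hc
          refine (Cardinal.power_le_power_right hc).trans ?_
          rw [← hcard, ← Cardinal.power_mul,
            Cardinal.mul_eq_self (Cardinal.aleph0_le_aleph 1)]
        have h1 : Cardinal.mk (J → J → Set (Iio α)) =
            (Cardinal.mk (Set (Iio α)) ^ Cardinal.mk J) ^ Cardinal.mk J := by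
          simp only [Cardinal.mk_pi, Cardinal.prod_const, Cardinal.lift_id]
        rw [h1, hJ]
        exact hpow _ (hpow _ h0)
      · simp only [Cardinal.sum_const, Cardinal.lift_id, hW]
        exact (Cardinal.mul_eq_self (Cardinal.aleph0_le_aleph 2)).le
    obtain ⟨φ⟩ := Cardinal.le_def _ _ |>.1 hle
    have hne : Nonempty W := by
      rw [← Cardinal.mk_ne_zero_iff]
      exact (lt_of_le_of_lt zero_le hW1).ne'
    have : Nonempty (Σ α : W, (J → J → Set (Iio α))) :=
      ⟨⟨Classical.arbitrary W, fun _ _ => ∅⟩⟩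
    exact ⟨Function.invFun φ, Function.invFun_surjective φ.injective⟩
  have henum' : ∃ (a : W → W) (E : W → J → J → Set W), ∀ (Z : J → J → Set W) (α : W),
      ∃ ξ, a ξ = α ∧ ∀ i ζ, E ξ i ζ = Z i ζ ∩ Iio α := by
    obtain ⟨e, he⟩ := henum
    refine ⟨fun ξ => (e ξ).1, fun ξ i ζ => Subtype.val '' ((e ξ).2 i ζ), fun Z α => ?_⟩
    obtain ⟨ξ, hξ⟩ := he ⟨α, fun i ζ => Subtype.val ⁻¹' (Z i ζ)⟩
    refine ⟨ξ, by simp only [hξ], fun i ζ => ?_⟩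
    have hgen : ∀ s : Σ α : W, (J → J → Set (Iio α)),
        s = ⟨α, fun i ζ => Subtype.val ⁻¹' (Z i ζ)⟩ →
        (Subtype.val '' (s.2 i ζ) : Set W) = Z i ζ ∩ Iio α := by
      rintro _ rfl
      simp [Subtype.image_preimage_coe, inter_comm]
    exact hgen _ hξ
  obtain ⟨a, E, hE⟩ := henum'
  have hφ : ∀ γ : W, ∃ φ : W → J, InjOn φ (Iio γ) := by
    intro γ
    have hle : Cardinal.mk (Iio γ) ≤ Cardinal.mk J := by rw [hJ]; exact hI γ
    obtain ⟨φ⟩ := Cardinal.le_def _ _ |>.1 hle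
    have hne : Nonempty J := by
      rw [← Cardinal.mk_ne_zero_iff, hJ]
      exact (Cardinal.aleph_pos 1).ne'
    refine ⟨fun x => if h : x < γ then φ ⟨x, h⟩ else Classical.arbitrary J, ?_⟩
    intro x hx y hy hxy
    simp only [mem_Iio] at hx hy
    simp only [hx, hy, dif_pos] at hxy
    exact congrArg Subtype.val (φ.injective hxy)
  choose φ hφ using hφ
  by_contra hcon
  push Not at hcon
  choose Yf Ff hYF using hcon
  -- candidates
  let V : J → J → (J → Set W) → W → Set W := fun i ζ y γ =>
    {ξ | ξ < γ ∧ φ γ ξ ≤ i ∧ ∀ ε < ζ, E ξ i ε = y ε ∩ Iio (a ξ)}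
  let G : J → J → (J → Set W) → W → Set W := fun i ζ y γ =>
    (⋃ ξ ∈ V i ζ y γ, E ξ i ζ) ∩ Iio γ
  have hGcongr : ∀ i ζ y y', (∀ ε < ζ, y ε = y' ε) → G i ζ y = G i ζ y' := by
    intro i ζ y y' h
    have : V i ζ y = V i ζ y' := by
      funext γ
      ext ξ
      simp only [V, mem_ofPred_eq]
      refine and_congr_right fun _ => and_congr_right fun _ => ?_
      exact forall₂_congr fun ε hε => by rw [h ε hε]
    simp only [G, this]
  have hrec : ∀ i, ∃ y : J → Set W, ∀ ζ, y ζ = Yf (G i ζ y) := by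
    intro i
    let H : (ζ : J) → ((ε : J) → ε < ζ → Set W) → Set W := fun ζ z =>
      Yf (G i ζ (fun ε => if h : ε < ζ then z ε h else ∅))
    refine ⟨(wellFounded_lt (α := J)).fix H, fun ζ => ?_⟩
    rw [WellFounded.fix_eq]
    simp only [H]
    congr 1
    apply hGcongr
    intro ε hε
    simp [hε]
  choose y hy using hrec
  choose h hh1 hh2 using hE y
  -- combine all functions
  have hF : ∃ F : W → W, ∀ α, h α < F α ∧ ∀ i ζ, Ff (G i ζ (y i)) α < F α := by
    have : ∀ α, ∃ β, h α < β ∧ ∀ i ζ, Ff (G i ζ (y i)) α < β := by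
      intro α
      obtain ⟨β, hβ⟩ := bounded_of_card hW1 hI (ι := Option (J × J)) (by
        simp only [Cardinal.mk_option, Cardinal.mk_prod, Cardinal.lift_id, hJ]
        refine Cardinal.add_le_of_le (Cardinal.aleph0_le_aleph 1) ?_
          (Cardinal.one_le_aleph0.trans (Cardinal.aleph0_le_aleph 1))
        exact (Cardinal.mul_eq_self (Cardinal.aleph0_le_aleph 1)).le)
        (fun o => match o with
          | none => h α
          | some (i, ζ) => Ff (G i ζ (y i)) α)
      exact ⟨β, hβ none, fun i ζ => hβ (some (i, ζ))⟩
    choose F hF using this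
    exact ⟨F, hF⟩
  obtain ⟨F, hF⟩ := hF
  obtain ⟨γ, hγF, hγc⟩ := exists_closed hW1 hI F
  obtain ⟨c, hcm, hcγ, hcof⟩ := id hγc
  -- choose i
  have hi : ∃ i, ∀ n, φ γ (h (c n)) ≤ i := by
    by_contra hno
    push Not at hno
    apply hJunc
    refine (countable_iUnion fun n => hJIic (φ γ (h (c n)))).mono ?_
    intro i _
    obtain ⟨n, hn⟩ := hno i
    exact mem_iUnion.2 ⟨n, hn.le⟩
  obtain ⟨i, hi⟩ := hi
  have hhγ : ∀ n, h (c n) < γ := fun n => (hF _).1.trans (hγF _ (hcγ n))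
  have hmemV : ∀ ζ n, h (c n) ∈ V i ζ (y i) γ := by
    intro ζ n
    refine ⟨hhγ n, hi n, fun ε _ => ?_⟩
    rw [hh2, hh1]
  have hbad : ∀ ζ, ∃ ξ ∈ V i ζ (y i) γ, E ξ i ζ ≠ y i ζ ∩ Iio (a ξ) := by
    intro ζ
    by_contra hno
    push Not at hno
    have h1 := hYF (G i ζ (y i)) γ (fun α hα => ((hF α).2 i ζ).trans (hγF α hα)) hγc
    rw [← hy] at h1
    apply h1
    ext x
    simp only [G, mem_inter_iff, mem_iUnion, mem_Iio, exists_prop]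
    constructor
    · rintro ⟨hx, hxγ⟩
      obtain ⟨n, hn⟩ := hcof x hxγ
      refine ⟨⟨h (c (n + 1)), hmemV ζ _, ?_⟩, hxγ⟩
      rw [hh2]
      exact ⟨hx, hn.trans_lt (hcm n.lt_succ_self)⟩
    · rintro ⟨⟨ξ, hξ, hx⟩, hxγ⟩
      rw [hno ξ hξ] at hx
      exact ⟨hx.1, hxγ⟩
  choose ξ hξV hξ using hbad
  have hinj : Function.Injective ξ := by
    have : ∀ ζ ζ', ζ < ζ' → ξ ζ ≠ ξ ζ' := by
      intro ζ ζ' hlt heq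
      have := (hξV ζ').2.2 ζ hlt
      rw [← heq] at this
      exact hξ ζ this
    intro ζ ζ' heq
    rcases lt_trichotomy ζ ζ' with hlt | hlt | hlt
    · exact absurd heq (this _ _ hlt)
    · exact hlt
    · exact absurd heq.symm (this _ _ hlt)
  apply hJunc
  have h2 : InjOn (fun ζ => φ γ (ξ ζ)) univ := by
    intro ζ _ ζ' _ heq
    exact hinj (hφ γ (hξV ζ).1 (hξV ζ').1 heq)
  refine MapsTo.countable_of_injOn (t := Iic i) ?_ h2 (hJIic i)
  intro ζ _
  exact (hξV ζ).2.1

/-! ### The combinatorial statement -/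

theorem combinatorial (hMA : MartinsAxiomOmega1.{u})
    (hcard : (2 : Cardinal.{u}) ^ (Cardinal.aleph 1) = Cardinal.aleph 2) :
    ∃ (W : Type u) (b : W → Set W), Cardinal.mk W = Cardinal.aleph 2 ∧
      (∀ A : Set W, Cardinal.mk A ≤ Cardinal.aleph 1 →
        ∃ f : W → ℕ, ∀ γ n, {x ∈ b γ ∩ A | f x = n}.Finite) ∧
      ∀ f : W → ℕ, ∃ γ n, {x ∈ b γ | f x = n}.Infinite := by
  classical
  let W : Type u := (Cardinal.aleph 2 : Cardinal.{u}).ord.ToType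
  let J : Type u := (Cardinal.aleph 1 : Cardinal.{u}).ord.ToType
  have hW : Cardinal.mk W = Cardinal.aleph 2 := Cardinal.mk_ord_toType _
  have hJ : Cardinal.mk J = Cardinal.aleph 1 := Cardinal.mk_ord_toType _
  have h12 : (Cardinal.aleph 2 : Cardinal.{u}) = Order.succ (Cardinal.aleph 1) := by
    rw [Cardinal.succ_aleph, one_add_one_eq_two]
  have hI : ∀ x : W, Cardinal.mk (Iio x) ≤ Cardinal.aleph 1 := by
    intro x
    rw [← Order.lt_succ_iff, ← h12]
    exact Cardinal.mk_Iio_toType_ord_lt x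
  have hJI : ∀ x : J, (Iio x).Countable := by
    intro x
    rw [← Cardinal.le_aleph0_iff_set_countable, ← Order.lt_succ_iff, Cardinal.succ_aleph0]
    exact Cardinal.mk_Iio_toType_ord_lt x
  have hW1 : Cardinal.aleph 1 < Cardinal.mk W := by
    rw [hW, h12]; exact Order.lt_succ _
  obtain ⟨Z, hZ⟩ := diamond hW hI hJ hJI hcard
  have hb : ∀ γ : W, ∃ b : Set W, b ⊆ Iio γ ∧ (∀ α < γ, (b ∩ Iio α).Finite) ∧ b.Countable ∧
      (CofOm γ → (∀ α < γ, ∃ x ∈ Z γ, α < x ∧ x < γ) → b ⊆ Z γ ∧ b.Infinite) := by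
    intro γ
    by_cases h : CofOm γ ∧ (∀ α < γ, ∃ x ∈ Z γ, α < x ∧ x < γ)
    · obtain ⟨⟨c, hc, hcγ, hcof⟩, h2⟩ := h
      choose z hz1 hz2 hz3 using fun n => h2 (c n) (hcγ n)
      refine ⟨range z, ?_, ?_, countable_range z, fun _ _ => ⟨?_, ?_⟩⟩
      · rintro _ ⟨n, rfl⟩; exact hz3 n
      · intro α hα
        obtain ⟨N, hN⟩ := hcof α hα
        refine ((Set.finite_lt_nat N).image z).subset ?_
        rintro _ ⟨⟨n, rfl⟩, hn⟩
        refine ⟨n, ?_, rfl⟩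
        by_contra hlt
        have : c N ≤ c n := hc.monotone (not_lt.1 hlt)
        exact absurd (hN.trans (this.trans (hz2 n).le)) (not_le.2 hn)
      · rintro _ ⟨n, rfl⟩; exact hz1 n
      · intro hfin
        obtain ⟨_, ⟨m, rfl⟩, hm⟩ := Set.exists_max_image (range z) id hfin ⟨z 0, 0, rfl⟩
        obtain ⟨n, hn⟩ := hcof (z m) (hz3 m)
        exact absurd (hn.trans_lt (hz2 n)) (not_lt.2 (hm (z n) ⟨n, rfl⟩))
    · exact ⟨∅, empty_subset _, by simp, countable_empty, fun h1 h2 => absurd ⟨h1, h2⟩ h⟩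
  choose b hb1 hb2 hb3 hb4 using hb
  refine ⟨W, b, hW, ?_, ?_⟩
  · intro A hA
    obtain ⟨α, hα⟩ := bounded_of_card hW1 hI hA (fun x : A => (x : W))
    have had : ∀ γ γ' : W, γ < γ' → (b γ ∩ b γ').Finite := fun γ γ' hlt =>
      (hb2 γ' γ hlt).subset fun x hx => ⟨hx.2, hb1 γ hx.1⟩
    have had' : ∀ γ γ' : W, γ ≠ γ' → (b γ ∩ b γ').Finite := by
      intro γ γ' hne
      rcases lt_or_gt_of_ne hne with h | h
      · exact had _ _ h
      · rw [inter_comm]; exact had _ _ h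
    obtain ⟨f, hf⟩ := MA_finite_to_one hMA (T := A) (I := Iic α)
      (fun i => Subtype.val ⁻¹' b i) (fun i => (hb3 i).preimage Subtype.val_injective)
      (fun i j hij => Set.Finite.preimage (f := Subtype.val) (s := b i ∩ b j)
        Subtype.val_injective.injOn (had' i j (fun h => hij (Subtype.ext h)))) hA (by
        rw [← Iio_insert]
        refine (Cardinal.mk_insert_le).trans ?_
        exact Cardinal.add_le_of_le (Cardinal.aleph0_le_aleph 1) (hI _)
          (Cardinal.one_le_aleph0.trans (Cardinal.aleph0_le_aleph 1)))
    refine ⟨fun x => if h : x ∈ A then f ⟨x, h⟩ else 0, fun γ n => ?_⟩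
    by_cases hγ : γ ≤ α
    · refine ((hf ⟨γ, hγ⟩ n).image Subtype.val).subset ?_
      rintro x ⟨⟨hx, hxA⟩, hn⟩
      simp only [dif_pos hxA] at hn
      exact ⟨⟨x, hxA⟩, ⟨hx, hn⟩, rfl⟩
    · refine (hb2 γ α (not_le.1 hγ)).subset ?_
      rintro x ⟨⟨hx, hxA⟩, -⟩
      exact ⟨hx, hα ⟨x, hxA⟩⟩
  · intro f
    have hn : ∃ n, ∀ α, ∃ x, f x = n ∧ α < x := by
      by_contra hno
      push Not at hno
      choose α hα using hno
      obtain ⟨γ, hγ⟩ := bounded_of_card hW1 hI (ι := ULift.{u} ℕ) (by simp)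
        (fun n => α n.down)
      exact absurd (hα (f γ) γ rfl) (not_le.2 (hγ ⟨f γ⟩))
    obtain ⟨n, hn⟩ := hn
    choose F hF1 hF2 using hn
    obtain ⟨γ, hγF, hγc, hγZ⟩ := hZ {x | f x = n} F
    obtain ⟨h1, h2⟩ := hb4 γ hγc (fun α hα => ⟨F α, by
      rw [← hγZ]; exact ⟨hF1 α, hγF α hα⟩, hF2 α, hγF α hα⟩)
    refine ⟨γ, n, h2.mono fun x hx => ⟨hx, ?_⟩⟩
    have := h1 hx
    rw [← hγZ] at this
    exact this.1

/-! ### The topology -/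

/-- Topology with a single non-isolated point `none`; each `b i` converges to `none`. -/
def starTop {X W ι : Type*} (e : X ≃ Option W) (b : ι → Set W) : TopologicalSpace X where
  IsOpen U := e.symm none ∈ U → ∀ i, {x ∈ b i | e.symm (some x) ∉ U}.Finite
  isOpen_univ := by simp
  isOpen_inter U V hU hV := by
    rintro ⟨h1, h2⟩ i
    refine ((hU h1 i).union (hV h2 i)).subset ?_
    rintro x ⟨hx, hx'⟩
    by_cases h : e.symm (some x) ∈ U
    · exact Or.inr ⟨hx, fun h' => hx' ⟨h, h'⟩⟩
    · exact Or.inl ⟨hx, h⟩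
  isOpen_sUnion S hS := by
    rintro ⟨U, hU, hp⟩ i
    refine (hS U hU hp i).subset ?_
    rintro x ⟨hx, hx'⟩
    exact ⟨hx, fun h => hx' ⟨U, hU, h⟩⟩

theorem starTop_frechet {X W ι : Type*} (e : X ≃ Option W) (b : ι → Set W) (x : X) :
    IsFrechetPt (starTop e b) x := by
  letI := starTop e b
  intro A hA
  change x ∈ closure A at hA
  by_cases hxA : x ∈ A
  · exact ⟨fun _ => x, fun _ => hxA, tendsto_const_nhds⟩
  by_cases hx : x = e.symm none
  · have : ∃ i, {w ∈ b i | e.symm (some w) ∈ A}.Infinite := by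
      by_contra hno
      simp only [not_exists, Set.not_infinite] at hno
      have hop : IsOpen Aᶜ := fun _ i => by simpa using hno i
      exact (mem_closure_iff.1 hA _ hop hxA).elim fun y hy => hy.1 hy.2
    obtain ⟨i, hi⟩ := this
    let u := hi.natEmbedding
    refine ⟨fun n => e.symm (some (u n)), fun n => (u n).2.2, ?_⟩
    change Tendsto _ _ (𝓝 x)
    rw [tendsto_nhds]
    intro U hU hxU
    rw [← Nat.cofinite_eq_atTop, Filter.mem_cofinite]
    have hf := hU (hx ▸ hxU) i
    refine Set.Finite.of_finite_image (f := fun n => ((u n : _) : W)) (hf.subset ?_) ?_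
    · rintro _ ⟨n, hn, rfl⟩
      exact ⟨(u n).2.1, hn⟩
    · exact (Subtype.val_injective.comp u.injective).injOn
  · exfalso
    have hop : IsOpen ({x} : Set X) := fun h => absurd (mem_singleton_iff.1 h).symm hx
    obtain ⟨y, hy, hyA⟩ := mem_closure_iff.1 hA _ hop rfl
    rw [mem_singleton_iff] at hy
    exact hxA (hy ▸ hyA)

theorem gdeltaMod_basis {X : Type*} (t : TopologicalSpace X) (O : Set X)
    (hO : IsOpen[gdeltaMod t] O) (x : X) (hx : x ∈ O) : ∃ G, @IsGδ X t G ∧ x ∈ G ∧ G ⊆ O := by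
  induction hO with
  | basic s hs => exact ⟨s, hs, hx, subset_rfl⟩
  | univ => exact ⟨univ, IsGδ.univ, trivial, subset_rfl⟩
  | inter s t' _ _ h1 h2 =>
    obtain ⟨G1, a1, b1, c1⟩ := h1 hx.1
    obtain ⟨G2, a2, b2, c2⟩ := h2 hx.2
    exact ⟨G1 ∩ G2, a1.inter a2, ⟨b1, b2⟩, inter_subset_inter c1 c2⟩
  | sUnion S _ h =>
    obtain ⟨s, hs, hxs⟩ := hx
    obtain ⟨G, a, b, c⟩ := h s hs hxs
    exact ⟨G, a, b, c.trans (subset_sUnion_of_mem hs)⟩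

theorem starTop_tightness {X : Type v} {W : Type u} (e : X ≃ Option W) (b : W → Set W)
    (hX : Cardinal.mk X = Cardinal.aleph 2)
    (h1 : ∀ A : Set W, Cardinal.mk A ≤ Cardinal.aleph 1 →
        ∃ f : W → ℕ, ∀ γ n, {x ∈ b γ ∩ A | f x = n}.Finite)
    (h2 : ∀ f : W → ℕ, ∃ γ n, {x ∈ b γ | f x = n}.Infinite) :
    tightness X (gdeltaMod (starTop e b)) = Cardinal.aleph 2 := by
  classical
  have hmem : Cardinal.aleph 2 ∈ {κ : Cardinal.{v} | Cardinal.aleph0 ≤ κ ∧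
      tightnessLe X (gdeltaMod (starTop e b)) κ} := by
    refine ⟨Cardinal.aleph0_le_aleph 2, fun x A hA => ⟨A, subset_rfl, ?_, hA⟩⟩
    rw [← hX]
    exact Cardinal.mk_set_le A
  refine le_antisymm (csInf_le' hmem) (le_csInf ⟨_, hmem⟩ ?_)
  rintro κ ⟨-, hκ⟩
  by_contra hlt
  have h12 : (Cardinal.aleph 2 : Cardinal.{v}) = Order.succ (Cardinal.aleph 1) := by
    rw [Cardinal.succ_aleph, one_add_one_eq_two]
  have hκ1 : κ ≤ Cardinal.aleph 1 := by
    rw [not_le, h12, Order.lt_succ_iff] at hlt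
    exact hlt
  let p : X := e.symm none
  have hcl : p ∈ @closure X (gdeltaMod (starTop e b)) {p}ᶜ := by
    rw [@mem_closure_iff X (gdeltaMod (starTop e b))]
    intro O hO hpO
    obtain ⟨G, hG, hpG, hGO⟩ := gdeltaMod_basis _ O hO p hpO
    obtain ⟨U, hU, rfl⟩ := (@isGδ_iff_eq_iInter_nat X (starTop e b) G).1 hG
    by_contra hemp
    have hw : ∀ w : W, ∃ n, e.symm (some w) ∉ U n := by
      intro w
      by_contra hno
      push Not at hno
      refine hemp ⟨e.symm (some w), hGO (mem_iInter.2 hno), ?_⟩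
      simp [p]
    choose f hf using hw
    obtain ⟨γ, n, hinf⟩ := h2 f
    refine hinf ((hU n (mem_iInter.1 hpG n) γ).subset ?_)
    rintro x ⟨hx, rfl⟩
    exact ⟨hx, hf x⟩
  obtain ⟨B, hB, hBκ, hpB⟩ := hκ p _ hcl
  let A : Set W := {w | e.symm (some w) ∈ B}
  have hA : Cardinal.mk A ≤ Cardinal.aleph 1 := by
    have hle : Cardinal.lift.{v} (Cardinal.mk A) ≤ Cardinal.lift.{u} (Cardinal.mk B) :=
      Cardinal.lift_mk_le_lift_mk_of_injective (f := fun w : A => (⟨e.symm (some w), w.2⟩ : B)) (by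
        intro w w' h
        have := congrArg Subtype.val h
        simpa [Subtype.ext_iff] using this)
    have := hle.trans (Cardinal.lift_le.2 (hBκ.trans hκ1))
    simpa using this
  obtain ⟨f, hf⟩ := h1 A hA
  let U : ℕ → Set X := fun n => {x | ∀ w, e x = some w → w ∈ A → f w ≠ n}
  have hG : @IsGδ X (starTop e b) (⋂ n, U n) := by
    refine @IsGδ.iInter_of_isOpen X ℕ (starTop e b) _ U fun n => ?_
    intro _ γ
    refine (hf γ n).subset ?_
    rintro w ⟨hw, hwU⟩
    simp only [U, mem_ofPred_eq, Equiv.apply_symm_apply, Option.some.injEq] at hwU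
    push Not at hwU
    obtain ⟨w', rfl, hwA, hn⟩ := hwU
    exact ⟨⟨hw, hwA⟩, hn⟩
  have hop : IsOpen[gdeltaMod (starTop e b)] (⋂ n, U n) :=
    TopologicalSpace.isOpen_generateFrom_of_mem hG
  obtain ⟨x, hx, hxB⟩ := (@mem_closure_iff X (gdeltaMod (starTop e b)) _ _).1 hpB _ hop (by
    simp [U, p])
  rcases hex : e x with _ | w
  · exact hB hxB (by simp [p, ← hex])
  · have hwA : w ∈ A := by
      change e.symm (some w) ∈ B
      rw [← hex]
      simpa using hxB
    exact mem_iInter.1 hx (f w) w hex hwA rfl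

/-- `MA(ω₁)` together with `2^{ω₁} = ω₂` implies that there is a Fréchet
topology on `ω₂ + 1` whose Gδ-modification has tightness `ω₂`. -/
theorem statement10 (hMA : MartinsAxiomOmega1.{u})
    (hcard : (2 : Cardinal.{u}) ^ (Cardinal.aleph 1) = Cardinal.aleph 2) :
    ∃ t : TopologicalSpace {β : Ordinal.{u} // β ≤ (Cardinal.aleph 2).ord},
      (∀ x : {β : Ordinal.{u} // β ≤ (Cardinal.aleph 2).ord}, IsFrechetPt t x) ∧
      tightness {β : Ordinal.{u} // β ≤ (Cardinal.aleph 2).ord} (gdeltaMod t) =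
        Cardinal.aleph 2 := by
  obtain ⟨W, b, hW, h1, h2⟩ := combinatorial hMA hcard
  have hX : Cardinal.mk {β : Ordinal.{u} // β ≤ (Cardinal.aleph 2).ord} = Cardinal.aleph 2 := by
    have h : {β : Ordinal.{u} | β ≤ (Cardinal.aleph 2).ord} =
      Iio (Order.succ (Cardinal.aleph 2).ord) := by
      ext β
      simp [Order.lt_succ_iff]
    change Cardinal.mk ({β : Ordinal.{u} | β ≤ (Cardinal.aleph 2).ord} : Set Ordinal.{u}) = _
    rw [h, Cardinal.mk_Iio_ordinal]
    simp
  have he : Nonempty ({β : Ordinal.{u} // β ≤ (Cardinal.aleph 2).ord} ≃ Option W) := by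
    rw [← Cardinal.lift_mk_eq', hX, Cardinal.mk_option, hW]
    simp
  obtain ⟨e⟩ := he
  exact ⟨starTop e b, starTop_frechet e b, starTop_tightness e b hX h1 h2⟩
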